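/- Let h ∈ F with h ≠ 0 be given by an admissible linear system 𝒜_h = (u_h, A_h, v_h) of dimension n with left family s_h = A_h⁻¹ v_h. Then the (n+1) × (n+1) block matrix A = [[−v_h, A_h], [0, u_h]] (first column [−v_h; 0], the top right n × n block equal to A_h, and bottom right 1 × n block equal to u_h = e₁) is invertible over F, the solution vector of the system A s = e_{n+1} is s = [h⁻¹; s_h h⁻¹], and consequently (e₁, A, e_{n+1}) is an admissible linear system for h⁻¹. -/

import Mathlib

/-!
The system `A s = e_{n+1}` reads `A_h y = v_h x`, `u_h y = 1` in the unknown `s = [x; y]`. Its first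
row forces `y = s_h x`, and then the second one becomes `h x = 1`. Equivalently, `h = u_h A_h⁻¹ v_h`
is the Schur complement of the block `A_h` of `A`, and eliminating that block inverts `A` as soon as
`h` is invertible.
-/

open Matrix

/-- The row vector `e₁ = (1,0,…,0)`. -/
def e1Row (F : Type*) [Semiring F] (n : ℕ) [NeZero n] : Matrix (Fin 1) (Fin n) F :=
  Matrix.of fun _ j => if j = 0 then 1 else 0

section BorderedMatrix

variable {R k l m n : Type*} [Ring R]
  [Fintype k] [Fintype l] [Fintype m] [Fintype n]
  {A : Matrix k n R} {B : Matrix n k R} {u : Matrix m n R} {w : Matrix k l R} {S : Matrix l m R}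

/-- The inverse of the bordered matrix `[[-w, A], [0, u]]`, in terms of an inverse `B` of `A` and
an inverse `S` of the Schur complement `u * B * w`. -/
def borderedInverse (B : Matrix n k R) (u : Matrix m n R) (w : Matrix k l R) (S : Matrix l m R) :
    Matrix (l ⊕ n) (k ⊕ m) R :=
  fromBlocks (-(S * (u * B))) S (B - B * w * S * (u * B)) (B * w * S)

theorem bordered_mul_borderedInverse [DecidableEq k] [DecidableEq m]
    (hAB : A * B = 1) (hS : u * B * w * S = 1) :
    fromBlocks (-w) A 0 u * borderedInverse B u w S = 1 := by
  have mul_left_family : A * (B * w * S) = w * S := by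
    rw [← Matrix.mul_assoc, ← Matrix.mul_assoc, hAB, Matrix.one_mul]
  have upper_left : -w * -(S * (u * B)) + A * (B - B * w * S * (u * B)) = 1 := by
    rw [Matrix.neg_mul, Matrix.mul_neg, neg_neg, Matrix.mul_sub, hAB, ← Matrix.mul_assoc A,
      mul_left_family, Matrix.mul_assoc, add_sub_cancel]
  have upper_right : -w * S + A * (B * w * S) = 0 := by
    rw [mul_left_family, Matrix.neg_mul, neg_add_cancel]
  have lower_right : u * (B * w * S) = 1 := by
    rw [← Matrix.mul_assoc, ← Matrix.mul_assoc, hS]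
  have lower_left : u * (B - B * w * S * (u * B)) = 0 := by
    rw [Matrix.mul_sub, ← Matrix.mul_assoc u, lower_right, Matrix.one_mul, sub_self]
  rw [borderedInverse, fromBlocks_multiply, upper_left, upper_right, Matrix.zero_mul,
    Matrix.zero_mul, zero_add, zero_add, lower_left, lower_right, fromBlocks_one]

theorem borderedInverse_mul_bordered [DecidableEq l] [DecidableEq n]
    (hBA : B * A = 1) (hS : S * (u * B * w) = 1) :
    borderedInverse B u w S * fromBlocks (-w) A 0 u = 1 := by
  have hu : u * B * A = u := by rw [Matrix.mul_assoc, hBA, Matrix.mul_one]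
  have upper_left : -(S * (u * B)) * -w = 1 := by
    rw [Matrix.neg_mul, Matrix.mul_neg, neg_neg, Matrix.mul_assoc, hS]
  have upper_right : -(S * (u * B)) * A + S * u = 0 := by
    rw [Matrix.neg_mul, Matrix.mul_assoc, hu, neg_add_cancel]
  have lower_left : (B - B * w * S * (u * B)) * -w = 0 := by
    rw [Matrix.mul_neg, Matrix.sub_mul, Matrix.mul_assoc _ (u * B), Matrix.mul_assoc _ S, hS,
      Matrix.mul_one, sub_self, neg_zero]
  have lower_right : (B - B * w * S * (u * B)) * A + B * w * S * u = 1 := by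
    rw [Matrix.sub_mul, Matrix.mul_assoc _ (u * B), hu, hBA, sub_add_cancel]
  rw [borderedInverse, fromBlocks_multiply, upper_left, upper_right, Matrix.mul_zero,
    Matrix.mul_zero, add_zero, add_zero, lower_left, lower_right, fromBlocks_one]

theorem borderedInverse_mul_fromRows_zero_one [DecidableEq m] :
    borderedInverse B u w S * fromRows (0 : Matrix k m R) (1 : Matrix m m R) =
      fromRows S (B * w * S) := by
  rw [borderedInverse, fromBlocks_mul_fromRows, Matrix.mul_zero, Matrix.mul_zero, Matrix.mul_one,
    Matrix.mul_one, zero_add, zero_add]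

end BorderedMatrix

theorem als_inverse_general {R m n : Type*} [Ring R] [Fintype m] [Fintype n]
    [DecidableEq m] [DecidableEq n] (h : Rˣ)
    (Ah : Matrix m n R) (Bh : Matrix n m R) (uh : Matrix (Fin 1) n R) (vh : Matrix m (Fin 1) R)
    (hAh : Ah * Bh = 1) (hAh' : Bh * Ah = 1) (hh : (h : R) = (uh * Bh * vh) 0 0) :
    let A : Matrix (m ⊕ Fin 1) (Fin 1 ⊕ n) R := fromBlocks (-vh) Ah 0 uh
    let v : Matrix (m ⊕ Fin 1) (Fin 1) R := fromRows 0 (1 : Matrix (Fin 1) (Fin 1) R)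
    let s : Matrix (Fin 1 ⊕ n) (Fin 1) R :=
      fromRows (Matrix.of fun _ _ => ↑h⁻¹) (Matrix.of fun p (_ : Fin 1) => (Bh * vh) p 0 * ↑h⁻¹)
    A * s = v ∧ ∃ B : Matrix (Fin 1 ⊕ n) (m ⊕ Fin 1) R,
      A * B = 1 ∧ B * A = 1 ∧ (B * v) (Sum.inl 0) 0 = ↑h⁻¹ := by
  intro A v s
  let S := scalar (Fin 1) (↑h⁻¹ : R)
  have schur : uh * Bh * vh = scalar (Fin 1) ↑h := by
    ext i j
    rw [Subsingleton.elim i 0, Subsingleton.elim j 0, ← hh, scalar_apply, diagonal_apply_eq]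
  have schur_mul : uh * Bh * vh * S = 1 := by rw [schur, ← map_mul, h.mul_inv, map_one]
  have mul_schur : S * (uh * Bh * vh) = 1 := by rw [schur, ← map_mul, h.inv_mul, map_one]
  have inverse_mul_v : borderedInverse Bh uh vh S * v = s := by
    refine borderedInverse_mul_fromRows_zero_one.trans (congrArg₂ fromRows ?_ ?_)
    · exact diagonal_unique _
    · ext p j
      rw [Subsingleton.elim j 0]
      exact mul_diagonal _ _ _ _
  have mul_inverse : A * borderedInverse Bh uh vh S = 1 :=
    bordered_mul_borderedInverse hAh schur_mul
  refine ⟨?_, borderedInverse Bh uh vh S, mul_inverse,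
    borderedInverse_mul_bordered hAh' mul_schur, ?_⟩
  · rw [← inverse_mul_v, ← Matrix.mul_assoc, mul_inverse, Matrix.one_mul]
  · rw [inverse_mul_v]
    rfl

/-- The admissible linear system for the inverse `h⁻¹` of a nonzero element `h`:
the block matrix `A = [[−v_h, A_h], [0, u_h]]` is invertible over `F`, the solution
of `A s = e_{n+1}` is `s = [h⁻¹; s_h h⁻¹]`, and `(e₁, A, e_{n+1})` is an admissible
linear system for `h⁻¹`. -/
theorem als_inverse {K F : Type*} [Field K] [DivisionRing F] [Algebra K F]
    {n : ℕ} [NeZero n]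
    (h : F) (hne : h ≠ 0)
    (Ah Bh : Matrix (Fin n) (Fin n) F) (vh : Matrix (Fin n) (Fin 1) K)
    (hAh : Ah * Bh = 1) (hAh' : Bh * Ah = 1)
    (hh : h = (e1Row F n * Bh * vh.map (algebraMap K F)) 0 0) :
    let A : Matrix (Fin n ⊕ Fin 1) (Fin 1 ⊕ Fin n) F :=
      fromBlocks (-(vh.map (algebraMap K F))) Ah 0 (e1Row F n)
    let v : Matrix (Fin n ⊕ Fin 1) (Fin 1) F :=
      fromRows 0 (1 : Matrix (Fin 1) (Fin 1) F)
    let s : Matrix (Fin 1 ⊕ Fin n) (Fin 1) F :=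
      fromRows (Matrix.of fun _ _ => h⁻¹)
        (Matrix.of fun p (_ : Fin 1) => (Bh * vh.map (algebraMap K F)) p 0 * h⁻¹)
    (A * s = v) ∧ ∃ B : Matrix (Fin 1 ⊕ Fin n) (Fin n ⊕ Fin 1) F,
      A * B = 1 ∧ B * A = 1 ∧ (B * v) (Sum.inl 0) 0 = h⁻¹ :=
  als_inverse_general (Units.mk0 h hne) Ah Bh (e1Row F n) _ hAh hAh' hh
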